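/- arXiv:2512.04633 — 5 statements merged into one kernel-verified Lean document; each statement's English description precedes it below -/
import Mathlib

section
/- Let K ⊆ ℝ² be a Minkowski centered convex body. Then its polar body K° is also Minkowski centered and s(K°) = s(K). -/
open scoped Pointwise RealInnerProductSpace
open Set

noncomputable section

abbrev E2 := EuclideanSpace ℝ (Fin 2)

/-- A convex body: compact convex set with nonempty interior. -/
def IsConvexBody (K : Set E2) : Prop :=
  Convex ℝ K ∧ IsCompact K ∧ (interior K).Nonempty

/-- circumradius `R(K,C)` -/
def circum (K C : Set E2) : ℝ :=
  sInf {ρ : ℝ | 0 < ρ ∧ ∃ t : E2, K ⊆ ρ • C + {t}}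

/-- inradius `r(K,C)` -/
def inrad (K C : Set E2) : ℝ :=
  sSup {ρ : ℝ | 0 < ρ ∧ ∃ t : E2, ρ • C + {t} ⊆ K}

/-- width `w(K,C)` -/
def widthB (K C : Set E2) : ℝ := 2 * inrad (K - K) (C - C)

/-- diameter `D(K,C)` -/
def diamB (K C : Set E2) : ℝ := 2 * circum (K - K) (C - C)

/-- Minkowski asymmetry `s(K)` -/
def minkAsym (K : Set E2) : ℝ :=
  sInf {ρ : ℝ | 0 < ρ ∧ ∃ c : E2, K - {c} ⊆ ρ • ({c} - K)}

/-- `K` is Minkowski centered -/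
def MinkCentered (K : Set E2) : Prop := K ⊆ minkAsym K • (-K)

/-- `τ(K)`: smallest `ρ > 0` with `K ∩ (-K) ⊆ ρ • ((K-K)/2)` -/
def tauB (K : Set E2) : ℝ :=
  sInf {ρ : ℝ | 0 < ρ ∧ K ∩ (-K) ⊆ ρ • ((2:ℝ)⁻¹ • (K - K))}

/-- golden ratio -/
def phiR : ℝ := (1 + Real.sqrt 5) / 2

def cExpr2 (s : ℝ) : ℝ :=
  (s^2+1)^2 / ((s^2-1) * (s^2+2*s-1+2*Real.sqrt (s*(s^2-1))))

def cExpr3 (s : ℝ) : ℝ := 2*(s^2-2*s-1) / ((s-3)*(s+1))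

/-- `ŝ`: the unique `s ∈ (φ,2)` where the two expressions agree. -/
def sHat : ℝ := sInf {s : ℝ | phiR < s ∧ s < 2 ∧ cExpr2 s = cExpr3 s}

def cFun (s : ℝ) : ℝ :=
  if s ≤ phiR then 1 else if s ≤ sHat then cExpr2 s else cExpr3 s

/-- polar body -/
def polarBody (K : Set E2) : Set E2 := {y | ∀ x ∈ K, (inner ℝ x y : ℝ) ≤ 1}

/-- `γ(K)` -/
def gammaB (K : Set E2) : ℝ :=
  sInf {ρ : ℝ | 0 < ρ ∧
    polarBody ((2:ℝ)⁻¹ • (polarBody K - polarBody K)) ⊆ ρ • convexHull ℝ (K ∪ -K)}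

/-- positive hull of two points -/
def posHull2 (a b : E2) : Set E2 := {x | ∃ α β : ℝ, 0 ≤ α ∧ 0 ≤ β ∧ x = α • a + β • b}

/-- asymmetry point of `K`: a point of `bd(K) ∩ bd(−(1/s(K))·K)` -/
def IsAsymPoint (K : Set E2) (p : E2) : Prop :=
  p ∈ frontier K ∧ p ∈ frontier ((-(minkAsym K)⁻¹) • K)

/-- a well-spread triple of asymmetry points -/
def WellSpread (K : Set E2) (p1 p2 p3 : E2) : Prop :=
  IsAsymPoint K p1 ∧ IsAsymPoint K p2 ∧ IsAsymPoint K p3 ∧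
  ∃ a1 a2 a3 : E2, a1 ≠ 0 ∧ a2 ≠ 0 ∧ a3 ≠ 0 ∧
    (∀ x ∈ K, (inner ℝ a1 x : ℝ) ≤ inner ℝ a1 p1) ∧
    (∀ x ∈ K, (inner ℝ a2 x : ℝ) ≤ inner ℝ a2 p2) ∧
    (∀ x ∈ K, (inner ℝ a3 x : ℝ) ≤ inner ℝ a3 p3) ∧
    (0:E2) ∈ interior (convexHull ℝ {p1, p2, p3}) ∧
    (0:E2) ∈ convexHull ℝ {a1, a2, a3}

/-- two points of `bd(K) ∩ bd(-K)` are consecutive -/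
def Consecutive (K : Set E2) (z1 z2 : E2) : Prop :=
  ¬ ∃ z, z ∈ frontier K ∩ frontier (-K) ∧ z ∈ interior (posHull2 z1 z2)

/-- point of the plane from coordinates -/
def pt (x y : ℝ) : E2 := (WithLp.equiv 2 (Fin 2 → ℝ)).symm ![x, y]

/-- the golden house -/
def goldenHouse : Set E2 :=
  convexHull ℝ {pt 1 0, pt (-1) 0, pt 1 (-1), pt (-1) (-1), pt 0 phiR}



theorem compact_hull_aux (B : Set E2) (hB : IsCompact B) : IsCompact (convexHull ℝ B) := by
  have key : convexHull ℝ B = ⋃ n ∈ Finset.range 4,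
      (fun q : (Fin n → ℝ) × (Fin n → E2) => ∑ i, q.1 i • q.2 i) ''
        (stdSimplex ℝ (Fin n) ×ˢ Set.pi univ (fun _ => B)) := by
    ext x
    simp only [mem_iUnion, Finset.mem_range, mem_image, mem_prod, Prod.exists, exists_prop]
    constructor
    · intro hx
      obtain ⟨ι, hι, z, w, hz, hai, hw, hw1, hx⟩ := eq_pos_convex_span_of_mem_convexHull hx
      have hcard := hai.card_le_finrank_succ
      have h2 : Module.finrank ℝ (vectorSpan ℝ (Set.range z)) ≤ 2 := by
        have := Submodule.finrank_le (vectorSpan ℝ (Set.range z))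
        simpa using this
      let e := Fintype.equivFin ι
      refine ⟨Fintype.card ι, by omega, w ∘ e.symm, z ∘ e.symm, ⟨⟨fun i => (hw _).le, ?_⟩, ?_⟩, ?_⟩
      · rw [← hw1]; exact Equiv.sum_comp e.symm w
      · intro i _; exact hz ⟨_, rfl⟩
      · rw [← hx]; exact Equiv.sum_comp e.symm (fun i => w i • z i)
    · rintro ⟨n, _, w, z, ⟨⟨hw, hw1⟩, hz⟩, rfl⟩
      exact mem_convexHull_of_exists_fintype w z hw hw1 (fun i => hz i trivial) rfl
  rw [key]
  refine (Finset.range 4).isCompact_biUnion fun n _ => ?_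
  refine IsCompact.image ((isCompact_stdSimplex ℝ (Fin n)).prod (isCompact_univ_pi fun _ => hB)) ?_
  fun_prop

theorem asym_ge_one_aux (K : Set E2) (hb : IsCompact K) (hi : (interior K).Nonempty)
    (ρ : ℝ) (hρ : 0 < ρ) (c : E2) (h : K - {c} ⊆ ρ • ({c} - K)) : 1 ≤ ρ := by
  have hd : Metric.diam K ≤ ρ * Metric.diam K := by
    refine Metric.diam_le_of_forall_dist_le (mul_nonneg hρ.le Metric.diam_nonneg) ?_
    have key : ∀ x ∈ K, ∃ y ∈ K, x = c + ρ • (c - y) := by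
      intro x hx
      obtain ⟨z, hz, hzx⟩ := h (Set.sub_mem_sub hx (mem_singleton c))
      obtain ⟨c', hc', y, hy, rfl⟩ := hz
      rw [mem_singleton_iff] at hc'
      subst hc'
      refine ⟨y, hy, ?_⟩
      simp only at hzx
      rw [hzx]; abel
    intro x hx y hy
    obtain ⟨x', hx', rfl⟩ := key x hx
    obtain ⟨y', hy', rfl⟩ := key y hy
    have : (c + ρ • (c - x')) - (c + ρ • (c - y')) = ρ • (y' - x') := by module
    rw [dist_eq_norm, this, norm_smul, Real.norm_of_nonneg hρ.le, ← dist_eq_norm]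
    exact mul_le_mul_of_nonneg_left (Metric.dist_le_diam_of_mem hb.isBounded hy' hx') hρ.le
  have hpos : 0 < Metric.diam K := by
    suffices hnt : K.Nontrivial from Metric.diam_pos hnt hb.isBounded
    obtain ⟨x, hx⟩ := hi
    have : K ∈ nhds x := mem_interior_iff_mem_nhds.1 hx
    by_contra hns
    rw [Set.not_nontrivial_iff] at hns
    have hsub : K ⊆ {x} := fun y hy => hns hy (interior_subset hx)
    have := interior_mono hsub hx
    simp at this
  nlinarith

theorem bipolar_aux (K : Set E2) (hK : Convex ℝ K) (hcl : IsClosed K) (h0 : (0:E2) ∈ K)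
    (y : E2) (h : ∀ b ∈ polarBody K, (inner ℝ y b : ℝ) ≤ 1) : y ∈ K := by
  by_contra hy
  obtain ⟨f, u, hf, hu⟩ := geometric_hahn_banach_closed_point hK hcl hy
  have hu0 : 0 < u := by simpa using hf 0 h0
  obtain ⟨g, rfl⟩ := (InnerProductSpace.toDual ℝ E2).surjective f
  simp only [InnerProductSpace.toDual_apply_apply] at hf hu
  have := h (u⁻¹ • g) (fun x hx => by
    rw [inner_smul_right, real_inner_comm]
    rw [inv_mul_le_iff₀ hu0]
    linarith [hf x hx])
  rw [inner_smul_right, real_inner_comm, inv_mul_le_iff₀ hu0] at this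
  linarith

theorem planar_aux {ι : Type*} [Fintype ι] (w : ι → ℝ) (b p : ι → E2) (u : E2) (s : ℝ)
    (hs : 1 < s) (hw : ∀ i, 0 ≤ w i) (hw1 : ∑ i, w i = 1) (hb : ∑ i, w i • b i = 0)
    (hpb : ∀ i, (inner ℝ (p i) (b i) : ℝ) = -s) (hle : ∀ i j, (inner ℝ (p i) (b j) : ℝ) ≤ 1)
    (hu : ∀ i, 0 < (inner ℝ (p i) u : ℝ)) : False := by
  have inn : ∀ x y : E2, (inner ℝ x y : ℝ) = x 0 * y 0 + x 1 * y 1 := by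
    intro x y; simp [PiLp.inner_apply, Fin.sum_univ_two]; ring
  simp only [inn] at hpb hle hu
  have hb0 : ∑ i, w i * b i 0 = 0 := by
    have := congrArg (fun x : E2 => x 0) hb; simpa using this
  have hb1 : ∑ i, w i * b i 1 = 0 := by
    have := congrArg (fun x : E2 => x 1) hb; simpa using this
  set d : ι → ℝ := fun i => u 0 * b i 1 - u 1 * b i 0 with hd
  set e : ι → ℝ := fun i => u 0 * b i 0 + u 1 * b i 1 with he
  set N : ℝ := u 0 ^ 2 + u 1 ^ 2 with hN
  have hN0 : ∀ _ : ι, 0 < N := by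
    intro i
    have := hu i
    by_contra hcon
    have h0 : u 0 = 0 := by nlinarith [sq_nonneg (u 0), sq_nonneg (u 1)]
    have h1 : u 1 = 0 := by nlinarith [sq_nonneg (u 0), sq_nonneg (u 1)]
    rw [h0, h1] at this
    simp at this
  have e0 : ∀ i, N * b i 0 = e i * u 0 - d i * u 1 := by intro i; simp only [hd, he, hN]; ring
  have e1 : ∀ i, N * b i 1 = e i * u 1 + d i * u 0 := by intro i; simp only [hd, he, hN]; ring
  have ha : ∀ i, d i = 0 → e i < 0 := by
    intro i hi
    have h1 : e i * (p i 0 * u 0 + p i 1 * u 1) = N * (-s) := by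
      rw [← hpb i]
      have a := e0 i
      have a' := e1 i
      rw [hi] at a a'
      linear_combination (-p i 0) * a - p i 1 * a'
    by_contra hcon
    push Not at hcon
    have := mul_nonneg hcon (hu i).le
    nlinarith [hN0 i]
  have hbb : ∀ i j, 0 < d i → d j < 0 → d i * e j - d j * e i < 0 := by
    intro i j hi hj
    have h1 : (d i * e j - d j * e i) * ((p i 0 * u 0 + p i 1 * u 1) + (p j 0 * u 0 + p j 1 * u 1))
        = N * (d i * ((p i 0 * b j 0 + p i 1 * b j 1) + (-s))
            + (- d j) * ((p j 0 * b i 0 + p j 1 * b i 1) + (-s))) := by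
      rw [← hpb i]
      have hh := hpb j
      have hh' := hpb i
      linear_combination (-N * d i) * (hh'-hh) + (-d i * (p i 0 + p j 0)) * e0 j + (-d i * (p i 1 + p j 1)) * e1 j
        + (d j * (p i 0 + p j 0)) * e0 i + (d j * (p i 1 + p j 1)) * e1 i
    have h2 : d i * ((p i 0 * b j 0 + p i 1 * b j 1) + (-s)) < 0 :=
      mul_neg_of_pos_of_neg hi (by linarith [hle i j])
    have h3 : (- d j) * ((p j 0 * b i 0 + p j 1 * b i 1) + (-s)) < 0 :=
      mul_neg_of_pos_of_neg (by linarith) (by linarith [hle j i])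
    by_contra hcon
    push Not at hcon
    have := mul_nonneg hcon (add_pos (hu i) (hu j)).le
    rw [h1] at this
    nlinarith [hN0 i]
  classical
  obtain ⟨t, ht1, ht2⟩ := Order.exists_between_finsets
    ((Finset.univ.filter (fun j => d j < 0)).image (fun j => e j / (- d j)))
    ((Finset.univ.filter (fun i => 0 < d i)).image (fun i => - e i / d i)) (by
      intro x hx y hy
      simp only [Finset.mem_image, Finset.mem_filter, Finset.mem_univ, true_and] at hx hy
      obtain ⟨j, hj, rfl⟩ := hx
      obtain ⟨i, hi, rfl⟩ := hy
      rw [div_lt_div_iff₀ (by linarith) hi]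
      nlinarith [hbb i j hi hj])
  have hneg : ∀ i, e i + t * d i < 0 := by
    intro i
    rcases lt_trichotomy (d i) 0 with h | h | h
    · have := ht1 _ (Finset.mem_image_of_mem _ (Finset.mem_filter.2 ⟨Finset.mem_univ i, h⟩))
      rw [div_lt_iff₀ (by linarith)] at this
      linarith
    · rw [h]; simpa using ha i h
    · have := ht2 _ (Finset.mem_image_of_mem _ (Finset.mem_filter.2 ⟨Finset.mem_univ i, h⟩))
      rw [lt_div_iff₀ h] at this
      linarith
  have hsum : ∑ i, w i * (e i + t * d i) = 0 := by
    have : ∀ i, w i * (e i + t * d i) =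
        (u 0 - t * u 1) * (w i * b i 0) + (u 1 + t * u 0) * (w i * b i 1) := by
      intro i; simp only [hd, he]; ring
    simp only [this, Finset.sum_add_distrib, ← Finset.mul_sum, hb0, hb1]
    simp
  have hz := (Finset.sum_eq_zero_iff_of_nonpos (fun i _ =>
    mul_nonpos_of_nonneg_of_nonpos (hw i) (hneg i).le)).1 hsum
  have : ∀ i, w i = 0 := fun i => by
    rcases mul_eq_zero.1 (hz i (Finset.mem_univ i)) with h | h
    · exact h
    · exact absurd h (hneg i).ne
  simp [this] at hw1

theorem hull_aux (K : Set E2) (hK : Convex ℝ K) (hcp : IsCompact K) (h0 : (0:E2) ∈ K)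
    (hpc : IsCompact (polarBody K)) (s : ℝ) (hs : 0 < s)
    (hbd : ∀ p ∈ K, ∀ b ∈ polarBody K, -s ≤ (inner ℝ p b : ℝ))
    (hopt : ∀ ρ : ℝ, 0 < ρ → ∀ c : E2, K - {c} ⊆ ρ • ({c} - K) → s ≤ ρ) :
    (0:E2) ∈ convexHull ℝ {b | b ∈ polarBody K ∧ ∃ p ∈ K, (inner ℝ p b : ℝ) = -s} := by
  have h0p : (0:E2) ∈ polarBody K := fun x _ => by simp
  have hM : IsCompact (K ×ˢ polarBody K) := hcp.prod hpc
  set B := {b | b ∈ polarBody K ∧ ∃ p ∈ K, (inner ℝ p b : ℝ) = -s} with hB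
  have hBc : IsCompact B := by
    have : B = Prod.snd '' ((K ×ˢ polarBody K) ∩ {q : E2 × E2 | (inner ℝ q.1 q.2 : ℝ) = -s}) := by
      ext b
      simp only [hB, mem_ofPred_eq, mem_image, mem_inter_iff, mem_prod, Prod.exists]
      constructor
      · rintro ⟨hb, p, hp, h⟩; exact ⟨p, b, ⟨⟨hp, hb⟩, h⟩, rfl⟩
      · rintro ⟨p, b', ⟨⟨hp, hb⟩, h⟩, rfl⟩; exact ⟨hb, p, hp, h⟩
    rw [this]
    refine (hM.inter_right ?_).image continuous_snd
    exact isClosed_eq (by fun_prop) continuous_const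
  by_contra hnot
  obtain ⟨f, a, hf0, hf⟩ := geometric_hahn_banach_point_closed (convex_convexHull ℝ B)
    (compact_hull_aux B hBc).isClosed hnot
  obtain ⟨v, rfl⟩ := (InnerProductSpace.toDual ℝ E2).surjective f
  simp only [InnerProductSpace.toDual_apply_apply, inner_zero_right] at hf hf0
  have hv : ∀ b ∈ B, 0 < (inner ℝ v b : ℝ) := fun b hb =>
    hf0.trans (hf b (subset_convexHull ℝ B hb))
  -- the part where `v` does not help
  have hZ : IsCompact ((K ×ˢ polarBody K) ∩ {q : E2 × E2 | (inner ℝ v q.2 : ℝ) ≤ 0}) :=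
    hM.inter_right (isClosed_le (by fun_prop) continuous_const)
  obtain ⟨z, hz, hzmax⟩ := hZ.exists_isMaxOn (f := fun q : E2 × E2 => -(inner ℝ q.1 q.2 : ℝ))
    ⟨(0, 0), ⟨h0, h0p⟩, by simp⟩ (by fun_prop)
  have hzs : -(inner ℝ z.1 z.2 : ℝ) < s := by
    have h1 := hbd z.1 hz.1.1 z.2 hz.1.2
    rcases h1.lt_or_eq with h | h
    · linarith
    · exact absurd (hv z.2 ⟨hz.1.2, z.1, hz.1.1, h.symm⟩) (not_lt.2 hz.2)
  set η := s + (inner ℝ z.1 z.2 : ℝ) with hη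
  have hηpos : 0 < η := by linarith
  obtain ⟨R, hR⟩ := hpc.isBounded.exists_norm_le
  have hR0 : 0 ≤ R := (norm_nonneg _).trans (hR 0 h0p)
  set κ := η / (2 * (‖v‖ * R + 1)) with hκ
  have hden : 0 < ‖v‖ * R + 1 := by positivity
  have hκpos : 0 < κ := by positivity
  have hκle : κ * (‖v‖ * R) < η := by
    have : κ * (2 * (‖v‖ * R + 1)) = η := by rw [hκ]; field_simp
    nlinarith [mul_nonneg hκpos.le (mul_nonneg (norm_nonneg v) hR0)]
  have hG : ∀ q ∈ K ×ˢ polarBody K, -(inner ℝ q.1 q.2 : ℝ) - κ * (inner ℝ v q.2 : ℝ) < s := by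
    intro q hq
    by_cases hq2 : (inner ℝ v q.2 : ℝ) ≤ 0
    · have h1 : -(inner ℝ q.1 q.2 : ℝ) ≤ -(inner ℝ z.1 z.2 : ℝ) := hzmax ⟨hq, hq2⟩
      have h2 : -(inner ℝ v q.2 : ℝ) ≤ ‖v‖ * R := by
        have := (abs_le.1 (abs_real_inner_le_norm v q.2)).1
        have h3 := mul_le_mul_of_nonneg_left (hR q.2 hq.2) (norm_nonneg v)
        linarith
      have h4 := mul_le_mul_of_nonneg_left h2 hκpos.le
      linarith
    · push Not at hq2
      have := hbd q.1 hq.1 q.2 hq.2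
      have := mul_pos hκpos hq2
      linarith
  obtain ⟨m, hm, hmmax⟩ := hM.exists_isMaxOn
    (f := fun q : E2 × E2 => -(inner ℝ q.1 q.2 : ℝ) - κ * (inner ℝ v q.2 : ℝ))
    ⟨(0, 0), h0, h0p⟩ (by fun_prop)
  set ρ := max (-(inner ℝ m.1 m.2 : ℝ) - κ * (inner ℝ v m.2 : ℝ)) (s / 2) with hρ
  have hρs : ρ < s := max_lt (hG m hm) (by linarith)
  have hρ0 : 0 < ρ := lt_of_lt_of_le (by linarith) (le_max_right _ _)
  have hGρ : ∀ p ∈ K, ∀ b ∈ polarBody K, -(inner ℝ p b : ℝ) - κ * (inner ℝ v b : ℝ) ≤ ρ := by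
    intro p hp b hb
    have : -(inner ℝ p b : ℝ) - κ * (inner ℝ v b : ℝ) ≤ _ := hmmax (show (p, b) ∈ _ from ⟨hp, hb⟩)
    exact this.trans (le_max_left _ _)
  refine absurd (hopt ρ hρ0 (-(κ / (1 + ρ)) • v) ?_) (not_le.2 hρs)
  set c := -(κ / (1 + ρ)) • v with hc
  rintro _ ⟨p, hp, c', hc', rfl⟩
  rw [mem_singleton_iff] at hc'
  rw [hc']
  clear hc'
  have hy : c - ρ⁻¹ • (p - c) ∈ K := by
    refine bipolar_aux K hK hcp.isClosed h0 _ fun b hb => ?_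
    have h1 := hGρ p hp b hb
    simp only [hc, inner_sub_left, inner_smul_left, RCLike.conj_to_real]
    have h2 : -(κ / (1 + ρ)) * (inner ℝ v b : ℝ)
        - ρ⁻¹ * ((inner ℝ p b : ℝ) - -(κ / (1 + ρ)) * (inner ℝ v b : ℝ))
        = ρ⁻¹ * (-(inner ℝ p b : ℝ) - κ * (inner ℝ v b : ℝ)) := by
      field_simp
      ring
    rw [h2, inv_mul_le_iff₀ hρ0]
    linarith
  refine ⟨ρ⁻¹ • (p - c), ⟨c, rfl, _, hy, by simp⟩, ?_⟩
  simp [smul_smul, hρ0.ne']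

theorem stmt14 (K : Set E2) (hK : IsConvexBody K) (hc : MinkCentered K) :
    MinkCentered (polarBody K) ∧ minkAsym (polarBody K) = minkAsym K := by
  obtain ⟨hconv, hcp, hint⟩ := hK
  have hge := asym_ge_one_aux K hcp hint
  have hbb : BddBelow {ρ : ℝ | 0 < ρ ∧ ∃ c : E2, K - {c} ⊆ ρ • ({c} - K)} :=
    ⟨0, fun ρ h => h.1.le⟩
  unfold MinkCentered at hc
  have hs1 : 1 ≤ minkAsym K := by
    rcases Set.eq_empty_or_nonempty
      {ρ : ℝ | 0 < ρ ∧ ∃ c : E2, K - {c} ⊆ ρ • ({c} - K)} with h | h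
    · exfalso
      have h0 : minkAsym K = 0 := by unfold minkAsym; rw [h]; exact Real.sInf_empty
      rw [h0] at hc
      have hsub : K ⊆ {0} := hc.trans (Set.zero_smul_set_subset _)
      obtain ⟨x, hx⟩ := hint
      have := interior_mono hsub hx
      simp at this
    · exact le_csInf h fun ρ hρ => by
        obtain ⟨h1, c, h2⟩ := hρ
        exact hge ρ h1 c h2
  have hopt : ∀ ρ : ℝ, 0 < ρ → ∀ c : E2, K - {c} ⊆ ρ • ({c} - K) → minkAsym K ≤ ρ :=
    fun ρ h c h' => csInf_le hbb ⟨h, c, h'⟩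
  generalize minkAsym K = s at *
  have hs0 : 0 < s := by linarith
  have hneg : ∀ p ∈ K, ∃ q ∈ K, p = -(s • q) := by
    intro p hp
    obtain ⟨q, hq, rfl⟩ := hc hp
    exact ⟨-q, hq, by simp⟩
  have h0int : (0:E2) ∈ interior K := by
    obtain ⟨x, hx⟩ := hint
    obtain ⟨q, hq, hxq⟩ := hneg x (interior_subset hx)
    have := hconv.combo_interior_self_mem_interior hx hq (a := 1 / (1 + s)) (b := s / (1 + s))
      (by positivity) (by positivity) (by field_simp)
    convert this using 1
    rw [hxq]
    module
  have h0 : (0:E2) ∈ K := interior_subset h0int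
  have hpcl : IsClosed (polarBody K) := by
    have : polarBody K = ⋂ x ∈ K, {y : E2 | (inner ℝ x y : ℝ) ≤ 1} := by
      ext y; simp [polarBody]
    rw [this]
    exact isClosed_biInter fun x _ => isClosed_le (by fun_prop) continuous_const
  have hpc : IsCompact (polarBody K) := by
    refine Metric.isCompact_of_isClosed_isBounded hpcl ?_
    obtain ⟨r, hr, hrK⟩ := Metric.nhds_basis_closedBall.mem_iff.1 (mem_interior_iff_mem_nhds.1 h0int)
    refine (Metric.isBounded_closedBall (x := (0:E2)) (r := 1 / r)).subset fun y hy => ?_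
    rw [mem_closedBall_zero_iff, le_div_iff₀ hr]
    by_cases hy0 : y = 0
    · simp [hy0]
    have hn : 0 < ‖y‖ := norm_pos_iff.2 hy0
    have h1 : (r / ‖y‖) • y ∈ K := hrK (by
      rw [mem_closedBall_zero_iff, norm_smul, Real.norm_of_nonneg (by positivity)]
      exact (div_mul_cancel₀ _ hn.ne').le)
    have h2 := hy _ h1
    rw [inner_smul_left, real_inner_self_eq_norm_sq] at h2
    simp only [RCLike.conj_to_real] at h2
    have h3 : r / ‖y‖ * ‖y‖ ^ 2 = ‖y‖ * r := by field_simp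
    linarith
  have hbd : ∀ p ∈ K, ∀ b ∈ polarBody K, -s ≤ (inner ℝ p b : ℝ) := by
    intro p hp b hb
    obtain ⟨q, hq, rfl⟩ := hneg p hp
    have := mul_le_mul_of_nonneg_left (hb q hq) hs0.le
    rw [inner_neg_left, inner_smul_left]
    simp only [RCLike.conj_to_real]
    linarith
  have hcent : polarBody K ⊆ s • (-polarBody K) := by
    intro b hb
    refine ⟨s⁻¹ • b, ?_, by simp [smul_smul, hs0.ne']⟩
    intro x hx
    have := hbd x hx b hb
    rw [inner_neg_right, inner_smul_right, ← mul_neg, inv_mul_le_iff₀ hs0]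
    linarith
  have hmem : s ∈ {ρ : ℝ | 0 < ρ ∧ ∃ c : E2, polarBody K - {c} ⊆ ρ • ({c} - polarBody K)} :=
    ⟨hs0, 0, by simpa using hcent⟩
  have hlow : ∀ ρ ∈ {ρ : ℝ | 0 < ρ ∧ ∃ c : E2, polarBody K - {c} ⊆ ρ • ({c} - polarBody K)},
      s ≤ ρ := by
    rintro ρ ⟨hρ, c, hcρ⟩
    by_contra hlt
    push Not at hlt
    have htouch : ∀ p ∈ K, ∀ b ∈ polarBody K, (inner ℝ p b : ℝ) = -s →
        0 < (inner ℝ p (-c) : ℝ) := by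
      intro p hp b hb hpb
      obtain ⟨_, ⟨c', hc', y, hy, rfl⟩, hby⟩ := hcρ (Set.sub_mem_sub hb (mem_singleton c))
      rw [mem_singleton_iff] at hc'
      subst hc'
      have h1 := congrArg (fun x : E2 => (inner ℝ p x : ℝ)) hby
      simp only [inner_smul_right, inner_sub_right, hpb] at h1
      have h2 := hy p hp
      rw [inner_neg_right]
      have h3 : ρ * (inner ℝ p y : ℝ) ≤ ρ * 1 := mul_le_mul_of_nonneg_left h2 hρ.le
      by_contra hcon
      push Not at hcon
      have : 0 ≤ (inner ℝ p c' : ℝ) := by linarith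
      nlinarith
    have hhull := hull_aux K hconv hcp h0 hpc s hs0 hbd hopt
    rw [mem_convexHull_iff_exists_fintype] at hhull
    obtain ⟨ι, _, w, b, hw, hw1, hbB, hb0⟩ := hhull
    choose hbK p hpK hpb using hbB
    rcases hs1.eq_or_lt with h1 | h1
    · have hne : Nonempty ι := by
        by_contra hemp
        rw [not_nonempty_iff] at hemp
        simp at hw1
      obtain ⟨i⟩ := hne
      have a := htouch _ (hpK i) _ (hbK i) (hpb i)
      have hpn : -p i ∈ K := by
        obtain ⟨q, hq, hpq⟩ := hneg _ (hpK i)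
        rw [hpq, ← h1]; simpa using hq
      have hbn : -b i ∈ polarBody K := by
        intro x hx
        have := hbd x hx _ (hbK i)
        rw [inner_neg_right]; linarith
      have a' := htouch _ hpn _ hbn (by rw [inner_neg_neg]; exact hpb i)
      rw [inner_neg_left] at a'
      linarith
    · exact planar_aux w b p (-c) s h1 hw hw1 hb0 hpb (fun i j => hbK j _ (hpK i))
        (fun i => htouch _ (hpK i) _ (hbK i) (hpb i))
  have heq : minkAsym (polarBody K) = s := (show IsLeast _ s from ⟨hmem, hlow⟩).csInf_eq
  refine ⟨?_, heq⟩
  unfold MinkCentered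
  rw [heq]
  exact hcent
end
end

section
/- Let K ⊆ ℝ² be a Minkowski centered convex body and C ⊆ ℝ² a 0-symmetric convex body such that K is pseudo-complete with respect to C and 0 is an incenter of K with respect to C (i.e. r(K,C)·C ⊆ K). Then D(K,C)/w(K,C) ≤ ((s(K)+1)/2)·τ(K). -/
open scoped Pointwise RealInnerProductSpace
open Set

noncomputable section

lemma aux_zero_int (C : Set E2) (hC : IsConvexBody C) (hs : C = -C) : (0:E2) ∈ interior C := by
  obtain ⟨hconv, -, ⟨x, hx⟩⟩ := hC
  have hxn : -x ∈ C := by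
    have h1 : x ∈ C := interior_subset hx
    rw [hs]; simpa using h1
  have := hconv.combo_interior_self_subset_interior (a := 1/2) (b := 1/2)
    (by norm_num) (by norm_num) (by norm_num)
  apply this
  exact ⟨(1/2:ℝ) • x, ⟨x, hx, rfl⟩, (1/2:ℝ) • (-x), ⟨-x, hxn, rfl⟩, by simp⟩

lemma aux_exists_ne (K : Set E2) (hK : IsConvexBody K) : ∃ x ∈ K, x ≠ 0 := by
  by_contra! h
  have h1 : K ⊆ {0} := fun x hx => h x hx
  obtain ⟨-, -, ⟨x, hx⟩⟩ := hK
  have := interior_mono h1 hx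
  simp at this

lemma aux_bdd (K : Set E2) (hK : IsConvexBody K) : ∃ M : ℝ, 0 < M ∧ ∀ x ∈ K - K, ‖x‖ ≤ M := by
  obtain ⟨M, hM, h⟩ := hK.2.1.isBounded.exists_pos_norm_le
  refine ⟨M + M, by positivity, ?_⟩
  rintro _ ⟨a, ha, b, hb, rfl⟩
  exact (norm_sub_le a b).trans (add_le_add (h a ha) (h b hb))

lemma aux_half (C : Set E2) (hC : Convex ℝ C) (hs : C = -C) {a b : E2} (ha : a ∈ C) (hb : b ∈ C) :
    (1/2:ℝ) • (a - b) ∈ C := by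
  have hb' : -b ∈ C := by rw [hs]; simpa using hb
  have := hC ha hb' (a := 1/2) (b := 1/2) (by norm_num) (by norm_num) (by norm_num)
  rwa [← smul_add, ← sub_eq_add_neg] at this

theorem stmt16 (K C : Set E2) (hK : IsConvexBody K) (hc : MinkCentered K)
    (hC : IsConvexBody C) (hCsym : C = -C)
    (hpc : inrad K C + circum K C = diamB K C)
    (hinc : inrad K C • C ⊆ K) :
    diamB K C / widthB K C ≤ ((minkAsym K + 1) / 2) * tauB K := by
  have hs0 : 0 ≤ minkAsym K := Real.sInf_nonneg (fun ρ h => h.1.le)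
  have ht0 : 0 ≤ tauB K := Real.sInf_nonneg (fun ρ h => h.1.le)
  have hcirc0 : 0 ≤ circum (K - K) (C - C) := Real.sInf_nonneg (fun ρ h => h.1.le)
  unfold MinkCentered at hc
  set s := minkAsym K with hsdef
  have hs : 0 < s := by
    rcases hs0.lt_or_eq with h | h
    · exact h
    · obtain ⟨x, hx, hx0⟩ := aux_exists_ne K hK
      obtain ⟨y, -, hy⟩ := hc hx
      rw [← h] at hy
      simp at hy
      exact absurd hy.symm hx0
  obtain ⟨M, hM, hMK⟩ := aux_bdd K hK
  have h0C := aux_zero_int C hC hCsym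
  have h0 : (0:E2) ∈ C := interior_subset h0C
  obtain ⟨ε, hε, hball⟩ := Metric.mem_nhds_iff.1 (mem_interior_iff_mem_nhds.1 h0C)
  -- nonemptiness of the diameter set
  have hne : {ρ : ℝ | 0 < ρ ∧ ∃ t : E2, K - K ⊆ ρ • (C - C) + {t}}.Nonempty := by
    refine ⟨2 * M / ε, by positivity, 0, ?_⟩
    intro x hx
    have hxM := hMK x hx
    have hmem : (2 * M / ε)⁻¹ • x ∈ C := by
      apply hball
      rw [mem_ball_zero_iff, norm_smul, Real.norm_of_nonneg (by positivity), inv_div,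
        div_mul_eq_mul_div, div_lt_iff₀ (by positivity)]
      nlinarith
    refine ⟨x, ⟨(2 * M / ε)⁻¹ • x, ⟨_, hmem, 0, h0, by simp⟩, ?_⟩, 0, rfl, by simp⟩
    exact smul_inv_smul₀ (by positivity) x
  -- the circumradius bound
  have hR : circum K C ≤ s / (s + 1) * diamB K C := by
    have key : circum K C * ((s + 1) / (2 * s)) ≤ circum (K - K) (C - C) := by
      apply le_csInf hne
      rintro d ⟨hd, t, ht⟩
      have hle : circum K C ≤ s / (s + 1) * (2 * d) := by
        apply csInf_le ⟨0, fun ρ h => h.1.le⟩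
        refine ⟨by positivity, 0, ?_⟩
        intro x hx
        obtain ⟨y, hy, hyx⟩ := hc hx
        have hy' : -y ∈ K := hy
        have hyx : s • y = x := hyx
        have e1 : x - -y ∈ K - K := ⟨x, hx, -y, hy', rfl⟩
        have e2 : -y - x ∈ K - K := ⟨-y, hy', x, hx, rfl⟩
        obtain ⟨_, ⟨_, ⟨a1, ha1, b1, hb1, rfl⟩, rfl⟩, _, rfl, h1⟩ := ht e1
        obtain ⟨_, ⟨_, ⟨a2, ha2, b2, hb2, rfl⟩, rfl⟩, _, rfl, h2⟩ := ht e2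
        simp only at h1 h2
        have m1 := aux_half C hC.1 hCsym ha1 hb1
        have m2 := aux_half C hC.1 hCsym ha2 hb2
        have m3 := aux_half C hC.1 hCsym m1 m2
        refine ⟨x, ⟨_, m3, ?_⟩, 0, rfl, by simp⟩
        have hxy : x + y = (1/2:ℝ) • (d • (a1 - b1) - d • (a2 - b2)) := by
          have : d • (a1 - b1) - d • (a2 - b2) = (x - -y) - (-y - x) := by
            rw [← h1, ← h2]; abel
          rw [this]; module
        have hy2 : y = s⁻¹ • x := by rw [← hyx, inv_smul_smul₀ hs.ne']
        have hx2 : x = (s / (s + 1)) • (x + y) := by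
          rw [hy2]
          have : x + s⁻¹ • x = (1 + s⁻¹) • x := by module
          rw [this, smul_smul]
          have : s / (s + 1) * (1 + s⁻¹) = 1 := by field_simp
          rw [this, one_smul]
        conv_rhs => rw [hx2, hxy]
        simp only
        module
      calc circum K C * ((s + 1) / (2 * s)) ≤ (s / (s + 1) * (2 * d)) * ((s + 1) / (2 * s)) := by
            gcongr
        _ = d := by field_simp
    unfold diamB
    calc circum K C = (circum K C * ((s + 1) / (2 * s))) * (2 * s / (s + 1)) := by field_simp
      _ ≤ circum (K - K) (C - C) * (2 * s / (s + 1)) := by gcongr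
      _ = _ := by ring
  have hD0 : 0 ≤ diamB K C := by unfold diamB; positivity
  rcases hD0.eq_or_lt with hD | hD
  · rw [← hD, zero_div]; positivity
  have hr : diamB K C ≤ (s + 1) * inrad K C := by
    have e : diamB K C - s / (s + 1) * diamB K C = diamB K C / (s + 1) := by
      field_simp; ring
    have : diamB K C / (s + 1) ≤ inrad K C := by linarith
    rw [div_le_iff₀ (by positivity)] at this
    linarith
  set r := inrad K C with hrdef
  have hrpos : 0 < r := by
    by_contra! h
    nlinarith
  -- upper bound for the inradius set
  obtain ⟨c, hcC, hc0⟩ := aux_exists_ne C hC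
  have hbdd : BddAbove {ρ : ℝ | 0 < ρ ∧ ∃ t : E2, ρ • (C - C) + {t} ⊆ K - K} := by
    refine ⟨2 * M / ‖c‖, ?_⟩
    rintro ρ ⟨hρ, t, ht⟩
    have e1 : ρ • (c - 0) + t ∈ K - K := ht ⟨_, ⟨_, ⟨c, hcC, 0, h0, rfl⟩, rfl⟩, t, rfl, rfl⟩
    have e2 : ρ • ((0:E2) - 0) + t ∈ K - K := ht ⟨_, ⟨_, ⟨0, h0, 0, h0, rfl⟩, rfl⟩, t, rfl, rfl⟩
    have n1 := hMK _ e1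
    have n2 := hMK _ e2
    have n3 := norm_sub_le (ρ • (c - 0) + t) (ρ • ((0:E2) - 0) + t)
    have : (ρ • (c - 0) + t) - (ρ • ((0:E2) - 0) + t) = ρ • c := by module
    rw [this, norm_smul, Real.norm_of_nonneg hρ.le] at n3
    rw [le_div_iff₀ (norm_pos_iff.2 hc0)]
    linarith
  have htne : {ρ : ℝ | 0 < ρ ∧ K ∩ (-K) ⊆ ρ • ((2:ℝ)⁻¹ • (K - K))}.Nonempty := by
    refine ⟨1, one_pos, ?_⟩
    rintro x ⟨hx, hx'⟩
    rw [one_smul]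
    exact ⟨x - -x, ⟨x, hx, -x, hx', rfl⟩, by simp only; module⟩
  have key : diamB K C / widthB K C / ((s + 1) / 2) ≤ tauB K := by
    apply le_csInf htne
    rintro ρ ⟨hρ, hsub⟩
    have hw : r / ρ ≤ inrad (K - K) (C - C) := by
      apply le_csSup hbdd
      refine ⟨by positivity, 0, ?_⟩
      rintro _ ⟨_, ⟨_, ⟨a, ha, b, hb, rfl⟩, rfl⟩, _, rfl, rfl⟩
      have m := aux_half C hC.1 hCsym ha hb
      have m' := aux_half C hC.1 hCsym hb ha
      have k1 : r • ((1/2:ℝ) • (a - b)) ∈ K := hinc ⟨_, m, rfl⟩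
      have k2 : r • ((1/2:ℝ) • (b - a)) ∈ K := hinc ⟨_, m', rfl⟩
      have k3 : -(r • ((1/2:ℝ) • (a - b))) ∈ K := by
        convert k2 using 1; module
      obtain ⟨_, ⟨z, hz, rfl⟩, h⟩ := hsub ⟨k1, k3⟩
      simp only at h ⊢
      have : (r / ρ) • (a - b) + 0 = z := by
        have h2 : z = (2 * ρ⁻¹) • (ρ • (2:ℝ)⁻¹ • z) := by
          rw [smul_smul, smul_smul]
          have : 2 * ρ⁻¹ * ρ * 2⁻¹ = 1 := by field_simp
          rw [this, one_smul]
        rw [h2, h, div_eq_mul_inv]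
        module
      rw [this]; exact hz
    have hwpos : 0 < widthB K C := by
      unfold widthB
      have : 0 < r / ρ := by positivity
      linarith
    have hw2 : 2 * r ≤ widthB K C * ρ := by
      unfold widthB
      rw [div_le_iff₀ hρ] at hw
      linarith
    rw [div_le_iff₀ (by positivity), div_le_iff₀ hwpos]
    nlinarith
  rw [div_le_iff₀ (by positivity)] at key
  linarith
end
end

section
/- For every s ∈ [1,2] one has ((s+1)/2)·c(s) ≤ (φ+1)/2, with equality if and only if s = φ. -/
open scoped Pointwise RealInnerProductSpace
open Set

noncomputable section

theorem stmt17 (s : ℝ) (hs1 : 1 ≤ s) (hs2 : s ≤ 2) :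
    ((s + 1) / 2) * cFun s ≤ (phiR + 1) / 2 ∧
      (((s + 1) / 2) * cFun s = (phiR + 1) / 2 ↔ s = phiR) := by
  have h5 : Real.sqrt 5 ^ 2 = 5 := Real.sq_sqrt (by norm_num)
  have hp2 : phiR ^ 2 = phiR + 1 := by
    unfold phiR; nlinarith
  have hp1 : (1.6 : ℝ) < phiR := by
    have : (2.2 : ℝ) < Real.sqrt 5 := by
      apply Real.lt_sqrt_of_sq_lt; norm_num
    unfold phiR; linarith
  have hp3 : phiR < (1.62 : ℝ) := by nlinarith
  by_cases h : s ≤ phiR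
  · have hc : cFun s = 1 := by simp [cFun, h]
    rw [hc]
    refine ⟨by linarith, fun e => by linarith, fun e => by rw [e]; ring⟩
  · have hlt : phiR < s := not_le.mp h
    have key : ((s + 1) / 2) * cFun s < (phiR + 1) / 2 := by
      unfold cFun
      rw [if_neg h]
      split_ifs
      · unfold cExpr2
        have hr : s ≤ Real.sqrt (s * (s ^ 2 - 1)) := by
          apply Real.le_sqrt_of_sq_le
          have : 0 ≤ s ^ 2 - 1 - s := by nlinarith
          nlinarith
        set r := Real.sqrt (s * (s ^ 2 - 1))
        have hs : 0 < s - 1 := by linarith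
        have hD : 0 < s ^ 2 + 2 * s - 1 + 2 * r := by nlinarith
        have e : (s + 1) / 2 * ((s ^ 2 + 1) ^ 2 / ((s ^ 2 - 1) * (s ^ 2 + 2 * s - 1 + 2 * r)))
            = (s ^ 2 + 1) ^ 2 / (2 * ((s - 1) * (s ^ 2 + 2 * s - 1 + 2 * r))) := by
          have h1 : s + 1 ≠ 0 := by linarith
          have h2 : s ^ 2 - 1 = (s - 1) * (s + 1) := by ring
          rw [h2]
          field_simp
        rw [e, div_lt_div_iff₀ (by positivity) (by norm_num)]
        have hQ : s ^ 3 - s ^ 2 - (1 + 4 * phiR) * s + 1 < 0 := by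
          have a1 : s * (s - 1) ≤ 2 := by nlinarith
          have a2 : s * (s * (s - 1)) ≤ s * 2 := mul_le_mul_of_nonneg_left a1 (by linarith)
          nlinarith
        have hP := mul_neg_of_pos_of_neg (sub_pos.mpr hlt) hQ
        have hE : (s - phiR) * (s ^ 3 - s ^ 2 - (1 + 4 * phiR) * s + 1)
            = (s ^ 2 + 1) ^ 2 - (phiR + 1) * ((s - 1) * (s ^ 2 + 4 * s - 1)) := by
          linear_combination (4 * s) * hp2
        have hm : (phiR + 1) * ((s - 1) * (s ^ 2 + 4 * s - 1))
            ≤ (phiR + 1) * ((s - 1) * (s ^ 2 + 2 * s - 1 + 2 * r)) := by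
          apply mul_le_mul_of_nonneg_left _ (by linarith)
          apply mul_le_mul_of_nonneg_left _ hs.le
          linarith
        linarith
      · unfold cExpr3
        have e : (s + 1) / 2 * (2 * (s ^ 2 - 2 * s - 1) / ((s - 3) * (s + 1)))
            = (1 + 2 * s - s ^ 2) / (3 - s) := by
          have h1 : s + 1 ≠ 0 := by linarith
          have h2 : s - 3 ≠ 0 := by linarith
          have h3 : 3 - s ≠ 0 := by linarith
          field_simp
          ring
        rw [e, div_lt_div_iff₀ (by linarith) (by norm_num)]
        nlinarith [sq_nonneg (s - 1.65)]
    exact ⟨key.le, fun e => absurd e key.ne, fun e => absurd e hlt.ne'⟩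
end
end

section
/- Fix τ ∈ [2/3, 1] and set t = 1/τ. For ν ∈ (0,1] define B(ν) = 4t(t+ν−1)/((ν+1)(2t+ν−1)) and S(ν) = (B(ν) + √(B(ν)² + 4))/2, and let ν⁺ = 1 − t + √(t(2−t)). Then ν⁺ ∈ (0,1], S is nondecreasing on (0, ν⁺] and nonincreasing on [ν⁺, 1]; in particular S(ν) ≤ S(ν⁺) for all ν ∈ (0,1]. -/
open scoped Pointwise RealInnerProductSpace
open Set

noncomputable section

theorem aux_S {a b : ℝ} (h : a ≤ b) :
    (a + Real.sqrt (a ^ 2 + 4)) / 2 ≤ (b + Real.sqrt (b ^ 2 + 4)) / 2 := by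
  have ha : |a| ≤ Real.sqrt (a ^ 2 + 4) := Real.abs_le_sqrt (by linarith)
  have hb : |b| ≤ Real.sqrt (b ^ 2 + 4) := Real.abs_le_sqrt (by linarith)
  have ha2 := Real.sq_sqrt (show (0:ℝ) ≤ a ^ 2 + 4 by positivity)
  have hb2 := Real.sq_sqrt (show (0:ℝ) ≤ b ^ 2 + 4 by positivity)
  have ha3 := Real.sqrt_pos.2 (show (0:ℝ) < a ^ 2 + 4 by positivity)
  have hb3 := Real.sqrt_pos.2 (show (0:ℝ) < b ^ 2 + 4 by positivity)
  set p := Real.sqrt (a ^ 2 + 4)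
  set q := Real.sqrt (b ^ 2 + 4)
  have h1 := neg_abs_le a
  have h2 := neg_abs_le b
  by_contra hc
  push Not at hc
  have e : (q - p) * (q + p) = (b - a) * (b + a) := by nlinarith
  have h3 : 0 < (p - q - (b - a)) * (p + q) := mul_pos (by linarith) (by linarith)
  have h4 : 0 ≤ (b - a) * (p + q + (a + b)) := mul_nonneg (by linarith) (by linarith)
  nlinarith

theorem aux_B {t x y : ℝ} (ht1 : 1 ≤ t) (hx : 0 < x) (hy : 0 < y)
    (h : 0 ≤ (y - x) * (t * (2 - t) - (t + x - 1) * (t + y - 1))) :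
    4 * t * (t + x - 1) / ((x + 1) * (2 * t + x - 1)) ≤
    4 * t * (t + y - 1) / ((y + 1) * (2 * t + y - 1)) := by
  have h1 : 0 < 2 * t + x - 1 := by linarith
  have h2 : 0 < 2 * t + y - 1 := by linarith
  rw [div_le_div_iff₀ (by positivity) (by positivity)]
  have h3 := mul_nonneg (show 0 ≤ 4 * t by linarith) h
  linarith

theorem stmt18 (τ : ℝ) (hτ1 : 2/3 ≤ τ) (hτ2 : τ ≤ 1)
    (t : ℝ) (ht : t = 1 / τ)
    (B : ℝ → ℝ) (hB : B = fun ν => 4 * t * (t + ν - 1) / ((ν + 1) * (2 * t + ν - 1)))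
    (S : ℝ → ℝ) (hS : S = fun ν => (B ν + Real.sqrt ((B ν) ^ 2 + 4)) / 2)
    (νp : ℝ) (hνp : νp = 1 - t + Real.sqrt (t * (2 - t))) :
    νp ∈ Set.Ioc (0:ℝ) 1 ∧
    MonotoneOn S (Set.Ioc 0 νp) ∧
    AntitoneOn S (Set.Icc νp 1) ∧
    ∀ ν ∈ Set.Ioc (0:ℝ) 1, S ν ≤ S νp := by
  have ht1 : 1 ≤ t := by rw [ht, le_div_iff₀ (by linarith)]; linarith
  have ht2 : t ≤ 3 / 2 := by rw [ht, div_le_iff₀ (by linarith)]; linarith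
  have hc : 0 ≤ t * (2 - t) := mul_nonneg (by linarith) (by linarith)
  have hr := Real.sq_sqrt hc
  have hr0 := Real.sqrt_nonneg (t * (2 - t))
  have hp0 : t - 1 < Real.sqrt (t * (2 - t)) :=
    Real.lt_sqrt_of_sq_lt (by nlinarith)
  have hp1 : Real.sqrt (t * (2 - t)) ≤ t := Real.sqrt_le_iff.2 ⟨by linarith, by nlinarith⟩
  set r := Real.sqrt (t * (2 - t))
  have hmem : νp ∈ Set.Ioc (0:ℝ) 1 := ⟨by linarith, by linarith⟩
  have key : ∀ x y : ℝ, 0 < x → 0 < y →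
      0 ≤ (y - x) * (t * (2 - t) - (t + x - 1) * (t + y - 1)) → S x ≤ S y := by
    intro x y hx hy h
    subst hS hB
    exact aux_S (aux_B ht1 hx hy h)
  have hm : MonotoneOn S (Set.Ioc 0 νp) := by
    intro x hx y hy hxy
    refine key x y hx.1 hy.1 (mul_nonneg (by linarith) ?_)
    have hx2 := hx.2
    have hy2 := hy.2
    have := mul_le_mul (show t + x - 1 ≤ r by linarith) (show t + y - 1 ≤ r by linarith)
      (by linarith [hy.1]) hr0
    nlinarith
  have ha : AntitoneOn S (Set.Icc νp 1) := by
    intro x hx y hy hxy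
    have hx1 := hx.1
    have hy1 := hy.1
    refine key y x (by linarith [hmem.1]) (by linarith [hmem.1])
      (mul_nonneg_of_nonpos_of_nonpos (by linarith) ?_)
    have := mul_le_mul (show r ≤ t + y - 1 by linarith) (show r ≤ t + x - 1 by linarith)
      hr0 (by linarith)
    nlinarith
  refine ⟨hmem, hm, ha, ?_⟩
  intro ν hν
  rcases le_total ν νp with h | h
  · exact hm ⟨hν.1, h⟩ ⟨hmem.1, le_rfl⟩ h
  · exact ha ⟨le_rfl, hmem.2⟩ ⟨h, hν.2⟩ h
end
end

section
/- For s ∈ [1,2] let P_s ⊆ ℝ² be the pentagon P_s = conv{(0, s/2), ((2s−1)/(2√3), −1/2), (−(2s−1)/(2√3), −1/2), ((2s−1)/(2√3), (−s²+s+1)/2), (−(2s−1)/(2√3), (−s²+s+1)/2)}. Then P_s is a Minkowski centered convex body with s(P_s) = s and τ(P_s) = min{1, s/(s²−1)} (with the convention that for s = 1 this minimum equals 1). -/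
open scoped Pointwise RealInnerProductSpace
open Set

noncomputable section

def CC (s u y : ℝ) : Prop :=
  -1 ≤ u ∧ u ≤ 1 ∧ -1/2 ≤ y ∧ y + (s^2-1)/2*u ≤ s/2 ∧ y - (s^2-1)/2*u ≤ s/2

def PP (a s : ℝ) : Set E2 := convexHull ℝ
        {pt 0 (s / 2), pt a (-1 / 2), pt (-a) (-1 / 2),
         pt a ((-s ^ 2 + s + 1) / 2), pt (-a) ((-s ^ 2 + s + 1) / 2)}

@[simp] lemma pt_zero' (x y : ℝ) : pt x y 0 = x := by simp [pt]
@[simp] lemma pt_one' (x y : ℝ) : pt x y 1 = y := by simp [pt]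

lemma pt_ext {z w : E2} (h0 : z 0 = w 0) (h1 : z 1 = w 1) : z = w := by
  ext i; fin_cases i
  · exact h0
  · exact h1

lemma pt_comb (α β x1 y1 x2 y2 : ℝ) :
    α • pt x1 y1 + β • pt x2 y2 = pt (α*x1+β*x2) (α*y1+β*y2) := by
  apply pt_ext <;> simp

lemma pt_surj {a : ℝ} (ha : 0 < a) (z : E2) : ∃ u y, z = pt (a*u) y :=
  ⟨z 0 / a, z 1, by apply pt_ext <;> simp; field_simp⟩

lemma pt_inj {a u y u' y' : ℝ} (ha : 0 < a) (h : pt (a*u) y = pt (a*u') y') : u = u' ∧ y = y' := by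
  have h0 := congrArg (fun z : E2 => z 0) h
  have h1 := congrArg (fun z : E2 => z 1) h
  simp at h0 h1
  exact ⟨h0.resolve_right ha.ne', h1⟩

lemma pt_sub (x1 y1 x2 y2 : ℝ) : pt x1 y1 - pt x2 y2 = pt (x1-x2) (y1-y2) := by
  apply pt_ext <;> simp
lemma pt_neg (x1 y1 : ℝ) : - pt x1 y1 = pt (-x1) (-y1) := by
  apply pt_ext <;> simp
lemma pt_smul (c x1 y1 : ℝ) : c • pt x1 y1 = pt (c*x1) (c*y1) := by
  apply pt_ext <;> simp

lemma vert {H : Set E2} (hH : Convex ℝ H) {x y1 y2 y : ℝ} (h1 : pt x y1 ∈ H) (h2 : pt x y2 ∈ H)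
    (hy1 : y1 ≤ y) (hy2 : y ≤ y2) : pt x y ∈ H := by
  rcases eq_or_lt_of_le (hy1.trans hy2) with h | h
  · have : y = y1 := by linarith
    rwa [this]
  · have hd : 0 < y2 - y1 := by linarith
    have := hH h1 h2 (a := (y2-y)/(y2-y1)) (b := (y-y1)/(y2-y1))
      (div_nonneg (by linarith) hd.le) (div_nonneg (by linarith) hd.le) (by field_simp; ring)
    rw [pt_comb] at this
    convert this using 2 <;> field_simp <;> ring

lemma mem_PP {a s : ℝ} (ha : 0 < a) (hs1 : 1 ≤ s) (hs2 : s ≤ 2) (u y : ℝ) :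
    pt (a*u) y ∈ PP a s ↔ CC s u y := by
  constructor
  · have hc : Convex ℝ {z : E2 | CC s (z 0 / a) (z 1)} := by
      intro z hz w hw α β hα hβ hab
      obtain ⟨u, y, rfl⟩ := pt_surj ha z
      obtain ⟨u', y', rfl⟩ := pt_surj ha w
      have e : ∀ v, a * v / a = v := fun v => by field_simp
      have e' : (α * (a*u) + β * (a*u'))/a = α*u+β*u' := by field_simp
      simp only [mem_ofPred_eq, pt_comb, pt_zero', pt_one', e, e', CC] at *
      obtain ⟨h1, h2, h3, h4, h5⟩ := hz
      obtain ⟨g1, g2, g3, g4, g5⟩ := hw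
      have hb : β = 1 - α := by linarith
      subst hb
      refine ⟨?_, ?_, ?_, ?_, ?_⟩ <;> nlinarith
    have hsub : PP a s ⊆ {z : E2 | CC s (z 0 / a) (z 1)} := by
      apply convexHull_min _ hc
      have e : -a / a = -1 := by field_simp
      intro z hz
      simp only [mem_insert_iff, mem_singleton_iff] at hz
      rcases hz with rfl | rfl | rfl | rfl | rfl <;>
        simp only [mem_ofPred_eq, pt_zero', pt_one', CC, zero_div, div_self ha.ne', e] <;>
        refine ⟨?_, ?_, ?_, ?_, ?_⟩ <;> nlinarith
    intro h
    have := hsub h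
    simpa [ha.ne'] using this
  · rintro ⟨h1, h2, h3, h4, h5⟩
    have hH : Convex ℝ (PP a s) := convex_convexHull _ _
    have m1 : pt 0 (s/2) ∈ PP a s := subset_convexHull _ _ (by simp)
    have m2 : pt a (-1/2) ∈ PP a s := subset_convexHull _ _ (by simp)
    have m3 : pt (-a) (-1/2) ∈ PP a s := subset_convexHull _ _ (by simp)
    have m4 : pt a ((-s ^ 2 + s + 1) / 2) ∈ PP a s := subset_convexHull _ _ (by simp)
    have m5 : pt (-a) ((-s ^ 2 + s + 1) / 2) ∈ PP a s := subset_convexHull _ _ (by simp)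
    have b : pt (a*u) (-1/2) ∈ PP a s := by
      have := hH m2 m3 (a := (1+u)/2) (b := (1-u)/2) (by linarith) (by linarith) (by ring)
      rw [pt_comb] at this
      convert this using 2 <;> ring
    rcases le_total 0 u with hu | hu
    · have t := hH m1 m4 (a := 1-u) (b := u) (by linarith) (by linarith) (by ring)
      rw [pt_comb] at t
      refine vert hH b (y2 := s/2 - (s^2-1)/2*u) ?_ h3 (by linarith)
      convert t using 2 <;> ring
    · have t := hH m1 m5 (a := 1+u) (b := -u) (by linarith) (by linarith) (by ring)
      rw [pt_comb] at t
      refine vert hH b (y2 := s/2 + (s^2-1)/2*u) ?_ h3 (by linarith)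
      convert t using 2 <;> ring

lemma body_PP {a s : ℝ} (ha : 0 < a) (hs1 : 1 ≤ s) (hs2 : s ≤ 2) : IsConvexBody (PP a s) := by
  refine ⟨convex_convexHull _ _, Set.Finite.isCompact_convexHull (s := {pt 0 (s / 2), pt a (-1 / 2), pt (-a) (-1 / 2), pt a ((-s ^ 2 + s + 1) / 2), pt (-a) ((-s ^ 2 + s + 1) / 2)}) ℝ (Set.toFinite _), 0, ?_⟩
  rw [mem_interior]
  refine ⟨{z : E2 | -1 < z 0 / a ∧ z 0 / a < 1 ∧ -1/2 < z 1 ∧ z 1 + (s^2-1)/2*(z 0 / a) < s/2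
    ∧ z 1 - (s^2-1)/2*(z 0 / a) < s/2}, ?_, ?_, ?_⟩
  · rintro z ⟨h1, h2, h3, h4, h5⟩
    have : z = pt (a * (z 0 / a)) (z 1) := by apply pt_ext <;> simp; field_simp
    rw [this, mem_PP ha hs1 hs2]
    exact ⟨h1.le, h2.le, h3.le, h4.le, h5.le⟩
  · have c0 : Continuous fun z : E2 => z 0 / a := by fun_prop
    have c1 : Continuous fun z : E2 => z 1 := by fun_prop
    exact (isOpen_lt continuous_const c0).inter ((isOpen_lt c0 continuous_const).inter
      ((isOpen_lt continuous_const c1).inter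
      ((isOpen_lt (c1.add (continuous_const.mul c0)) continuous_const).inter
      (isOpen_lt (c1.sub (continuous_const.mul c0)) continuous_const))))
  · simp; norm_num; linarith

lemma sub_PP {a s : ℝ} (ha : 0 < a) (hs1 : 1 ≤ s) (hs2 : s ≤ 2) : PP a s ⊆ s • (-PP a s) := by
  intro z hz
  obtain ⟨u, y, rfl⟩ := pt_surj ha z
  rw [mem_PP ha hs1 hs2] at hz
  obtain ⟨h1, h2, h3, h4, h5⟩ := hz
  have hs : 0 < s := by linarith
  refine mem_smul_set.2 ⟨pt (a * (u/s)) (y/s), ?_, ?_⟩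
  · rw [Set.mem_neg, pt_neg, ← mul_neg, mem_PP ha hs1 hs2]
    have k : 0 ≤ (s^2-1)/2 := by nlinarith
    have k1 := mul_le_mul_of_nonneg_left h1 k
    have k2 := mul_le_mul_of_nonneg_left h2 k
    refine ⟨?_, ?_, ?_, ?_, ?_⟩
    · rw [← neg_div, le_div_iff₀ hs]; linarith
    · rw [← neg_div, div_le_iff₀ hs]; linarith
    · rw [← neg_div, le_div_iff₀ hs]
      rcases le_total 0 u with hu | hu <;> nlinarith
    · rw [show -(y/s) + (s^2-1)/2 * -(u/s) = (-y - (s^2-1)/2*u)/s by ring, div_le_iff₀ hs]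
      nlinarith
    · rw [show -(y/s) - (s^2-1)/2 * -(u/s) = (-y + (s^2-1)/2*u)/s by ring, div_le_iff₀ hs]
      nlinarith
  · rw [pt_smul]; congr 1 <;> field_simp

lemma asym_PP {a s : ℝ} (ha : 0 < a) (hs1 : 1 ≤ s) (hs2 : s ≤ 2) : minkAsym (PP a s) = s := by
  apply IsLeast.csInf_eq
  constructor
  · refine ⟨by linarith, 0, ?_⟩
    simpa using sub_PP ha hs1 hs2
  · rintro ρ ⟨hρ, c, hc⟩
    obtain ⟨p, q, rfl⟩ := pt_surj ha c
    have key : ∀ u y, CC s u y → ∃ u' y', CC s u' y' ∧ u - p = ρ * (p - u') ∧ y - q = ρ*(q-y') := by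
      intro u y h
      rw [← mem_PP ha hs1 hs2] at h
      have := hc (Set.sub_mem_sub h (mem_singleton _))
      obtain ⟨w, hw, e⟩ := mem_smul_set.1 this
      obtain ⟨_, rfl, v, hv, rfl⟩ := Set.mem_sub.1 hw
      obtain ⟨u', y', rfl⟩ := pt_surj ha v
      rw [mem_PP ha hs1 hs2] at hv
      simp only [pt_sub, pt_smul, ← mul_sub] at e
      rw [mul_left_comm] at e
      obtain ⟨e1, e2⟩ := pt_inj ha e
      exact ⟨u', y', hv, e1.symm, e2.symm⟩
    obtain ⟨u1, y1, ⟨-, -, a3, -, -⟩, -, a7⟩ := key 0 (s/2) ⟨by norm_num, by norm_num, by linarith, by linarith, by linarith⟩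
    obtain ⟨u2, y2, ⟨-, -, -, b4, b5⟩, b6, b7⟩ := key 1 (-1/2) ⟨by norm_num, by norm_num, by linarith, by nlinarith, by nlinarith⟩
    obtain ⟨u3, y3, ⟨-, -, -, c4, c5⟩, c6, c7⟩ := key (-1) (-1/2) ⟨by norm_num, by norm_num, by linarith, by nlinarith, by nlinarith⟩
    have A : s/2 - q ≤ ρ * (q + 1/2) := by rw [a7]; gcongr; linarith
    have B := mul_le_mul_of_nonneg_left b5 hρ.le
    have C := mul_le_mul_of_nonneg_left c4 hρ.le
    have B' : -(s^2)/2 ≥ -ρ*s/2 + (1+ρ)*(q - (s^2-1)/2*p) := by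
      have : ρ*(y2 - (s^2-1)/2*u2) = ρ*y2 - (s^2-1)/2*(ρ*u2) := by ring
      have e1 : ρ*y2 = ρ*q - (-1/2-q) := by linarith
      have e2 : ρ*u2 = ρ*p - (1-p) := by linarith
      rw [this, e1, e2] at B
      linarith
    have C' : -(s^2)/2 ≥ -ρ*s/2 + (1+ρ)*(q + (s^2-1)/2*p) := by
      have : ρ*(y3 + (s^2-1)/2*u3) = ρ*y3 + (s^2-1)/2*(ρ*u3) := by ring
      have e1 : ρ*y3 = ρ*q - (-1/2-q) := by linarith
      have e2 : ρ*u3 = ρ*p - (-1-p) := by linarith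
      rw [this, e1, e2] at C
      linarith
    by_contra! hlt
    nlinarith

set_option maxHeartbeats 1000000 in
lemma tau_PP {a s m : ℝ} (ha : 0 < a) (hs1 : 1 ≤ s) (hs2 : s ≤ 2) (hm0 : 0 < m) (hm1 : m ≤ 1)
    (hm2 : m * (s^2-1) ≤ s) (hm : m = 1 ∨ m * (s^2-1) = s) : tauB (PP a s) = m := by
  apply IsLeast.csInf_eq
  constructor
  · refine ⟨hm0, ?_⟩
    rintro z ⟨hz, hz'⟩
    rcases hm with rfl | hm
    · rw [one_smul]
      refine mem_smul_set.2 ⟨z - (-z), Set.sub_mem_sub hz hz', ?_⟩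
      rw [sub_neg_eq_add, ← two_smul ℝ z, smul_smul]; norm_num
    · have hs : 1 < s := by
        rcases eq_or_lt_of_le hs1 with h | h
        · subst h; norm_num at hm
        · exact h
      -- main containment for y ≥ 0
      have main : ∀ u y, 0 ≤ y → CC s u y → CC s (-u) (-y) →
          ∃ u1 y1 u2 y2, CC s u1 y1 ∧ CC s u2 y2 ∧ u = m*((u1-u2)/2) ∧ y = m*((y1-y2)/2) := by
        rintro u y hy ⟨h1, h2, h3, h4, h5⟩ ⟨g1, g2, g3, g4, g5⟩
        obtain ⟨U, rfl⟩ : ∃ U, u = m*U := ⟨u/m, by field_simp⟩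
        obtain ⟨Y, rfl⟩ : ∃ Y, y = m*Y := ⟨y/m, by field_simp⟩
        have hY : 0 ≤ Y := by nlinarith
        have kk : 0 < (s^2-1) := by nlinarith
        have mm : m * ((s-1)*(s+1)) = s := by linarith
        have m2 : m*(s-1)*(s+1) = s := by linarith
        have m3 : 2 ≤ m*(s+1) := by
          by_contra! hh
          have : m*(s+1)*(s-1) < 2*(s-1) := mul_lt_mul_of_pos_right hh (by linarith)
          nlinarith
        have hU1 : U ≤ 1 := by
          have : m*(s^2-1)*U ≤ m*(s^2-1)*1 := by rw [hm]; nlinarith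
          exact le_of_mul_le_mul_left this (by positivity)
        have hU2 : -1 ≤ U := by
          have : m*(s^2-1)*(-U) ≤ m*(s^2-1)*1 := by rw [hm]; nlinarith
          have := le_of_mul_le_mul_left this (by positivity)
          linarith
        have hY1 : Y ≤ (s+1)/4 := by
          have : m * Y ≤ m * ((s+1)/4) := by linarith
          exact le_of_mul_le_mul_left this hm0
        have hR1 : Y + (s^2-1)/2*U ≤ (s^2+s)/4 := by
          have : m * (Y + (s^2-1)/2*U) ≤ m * ((s^2+s)/4) := by nlinarith
          exact le_of_mul_le_mul_left this hm0
        have hR2 : Y - (s^2-1)/2*U ≤ (s^2+s)/4 := by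
          have : m * (Y - (s^2-1)/2*U) ≤ m * ((s^2+s)/4) := by nlinarith
          exact le_of_mul_le_mul_left this hm0
        clear h1 h2 h3 h4 h5 g1 g2 g3 g4 g5
        have k2 : 0 ≤ (s^2-1)/2 := by linarith
        have hss : s^2 ≤ s + 2 := by nlinarith
        clear mm m2 m3 hz hz' kk hy
        rcases le_total U (-1/2) with hc | hc
        · have r1 := mul_nonneg k2 (show 0 ≤ -1/2 - U by linarith)
          refine ⟨2*U+1, 2*Y-1/2, 1, -1/2, ⟨?_, ?_, ?_, ?_, ?_⟩, ⟨?_, ?_, ?_, ?_, ?_⟩, by ring, by ring⟩ <;> linarith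
        · rcases le_total U (1/2) with hd | hd
          · have r1 := mul_nonneg k2 (show 0 ≤ U + 1/2 by linarith)
            have r2 := mul_nonneg k2 (show 0 ≤ 1/2 - U by linarith)
            refine ⟨0, 2*Y-1/2, -2*U, -1/2, ⟨?_, ?_, ?_, ?_, ?_⟩, ⟨?_, ?_, ?_, ?_, ?_⟩, by ring, by ring⟩ <;> linarith
          · have r1 := mul_nonneg k2 (show 0 ≤ U - 1/2 by linarith)
            refine ⟨2*U-1, 2*Y-1/2, -1, -1/2, ⟨?_, ?_, ?_, ?_, ?_⟩, ⟨?_, ?_, ?_, ?_, ?_⟩, by ring, by ring⟩ <;> linarith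
      have fin : ∀ u y u1 y1 u2 y2, CC s u1 y1 → CC s u2 y2 → u = m*((u1-u2)/2) → y = m*((y1-y2)/2) →
          pt (a*u) y ∈ m • ((2:ℝ)⁻¹ • (PP a s - PP a s)) := by
        rintro u y u1 y1 u2 y2 k1 k2 rfl rfl
        rw [← mem_PP ha hs1 hs2] at k1 k2
        refine mem_smul_set.2 ⟨_, mem_smul_set.2 ⟨_, Set.sub_mem_sub k1 k2, rfl⟩, ?_⟩
        simp only [pt_sub, pt_smul]
        congr 1 <;> ring
      obtain ⟨u, y, rfl⟩ := pt_surj ha z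
      rw [Set.mem_neg, pt_neg, ← mul_neg, mem_PP ha hs1 hs2] at hz'
      rw [mem_PP ha hs1 hs2] at hz
      rcases le_total 0 y with hy | hy
      · obtain ⟨u1, y1, u2, y2, k1, k2, e1, e2⟩ := main u y hy hz hz'
        exact fin _ _ _ _ _ _ k1 k2 e1 e2
      · obtain ⟨u1, y1, u2, y2, k1, k2, e1, e2⟩ := main (-u) (-y) (by linarith) hz' (by simpa using hz)
        exact fin _ _ _ _ _ _ k2 k1 (by linarith) (by linarith)
  · rintro ρ ⟨hρ, h⟩
    have q1 : pt (a*m) 0 ∈ PP a s := by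
      rw [mem_PP ha hs1 hs2]
      exact ⟨by linarith, hm1, by norm_num, by linarith, by nlinarith⟩
    have q2 : pt (a*m) 0 ∈ -PP a s := by
      rw [Set.mem_neg, pt_neg, ← mul_neg, mem_PP ha hs1 hs2]
      exact ⟨by linarith, by linarith, by norm_num, by nlinarith, by linarith⟩
    obtain ⟨_, hw, e⟩ := mem_smul_set.1 (h ⟨q1, q2⟩)
    obtain ⟨_, hw2, rfl⟩ := mem_smul_set.1 hw
    obtain ⟨v, hv, w, hw3, rfl⟩ := Set.mem_sub.1 hw2
    obtain ⟨u1, y1, rfl⟩ := pt_surj ha v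
    obtain ⟨u2, y2, rfl⟩ := pt_surj ha w
    rw [mem_PP ha hs1 hs2] at hv hw3
    simp only [pt_sub, pt_smul, ← mul_sub] at e
    rw [show ρ * (2⁻¹ * (a * (u1 - u2))) = a * (ρ * ((u1-u2)/2)) by ring] at e
    obtain ⟨e1, -⟩ := pt_inj ha e
    rw [← e1]
    have : (u1-u2)/2 ≤ 1 := by linarith [hv.2.1, hw3.1]
    nlinarith

theorem stmt19 (s : ℝ) (hs1 : 1 ≤ s) (hs2 : s ≤ 2) :
    (let P : Set E2 := convexHull ℝ
        {pt 0 (s / 2),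
         pt ((2 * s - 1) / (2 * Real.sqrt 3)) (-1 / 2),
         pt (-((2 * s - 1) / (2 * Real.sqrt 3))) (-1 / 2),
         pt ((2 * s - 1) / (2 * Real.sqrt 3)) ((-s ^ 2 + s + 1) / 2),
         pt (-((2 * s - 1) / (2 * Real.sqrt 3))) ((-s ^ 2 + s + 1) / 2)}
     IsConvexBody P ∧ MinkCentered P ∧ minkAsym P = s ∧
       tauB P = if s = 1 then 1 else min 1 (s / (s ^ 2 - 1))) := by
  have ha : 0 < (2 * s - 1) / (2 * Real.sqrt 3) := by
    have : 0 < 2 * s - 1 := by linarith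
    positivity
  refine ⟨body_PP ha hs1 hs2, ?_, asym_PP ha hs1 hs2, ?_⟩
  · change PP _ s ⊆ minkAsym (PP _ s) • (-PP _ s)
    rw [asym_PP ha hs1 hs2]
    exact sub_PP ha hs1 hs2
  · by_cases h1 : s = 1
    · rw [if_pos h1]
      exact tau_PP ha hs1 hs2 one_pos le_rfl (by subst h1; norm_num) (Or.inl rfl)
    · rw [if_neg h1]
      have hs : 1 < s := lt_of_le_of_ne hs1 (Ne.symm h1)
      have k : 0 < s^2-1 := by nlinarith
      refine tau_PP ha hs1 hs2 (lt_min one_pos (by positivity)) (min_le_left _ _) ?_ ?_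
      · rw [← le_div_iff₀ k]; exact min_le_right _ _
      · rcases min_choice 1 (s/(s^2-1)) with h | h
        · exact Or.inl h
        · right; rw [h]; field_simp
end
end
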